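/- arXiv:math/0504111 — 2 statements merged into one kernel-verified Lean document; each statement's English description precedes it below -/
import Mathlib

section
/- Let J be the monomial ideal of K[t_{ij} : 1 ≤ i ≤ m, 1 ≤ j ≤ n] generated by all squarefree monomials t_{i_1 j_1}···t_{i_k j_k} with 1 ≤ i_1 < ... < i_k ≤ m, 1 ≤ j_1,...,j_k ≤ n and j_1 + ... + j_k ≥ n + k. Then the facets of the simplicial complex of squarefree monomials not in J are exactly the sets F_p = {t_{ij} : 1 ≤ i ≤ m, 1 ≤ j ≤ p_i} for p = (p_1,...,p_m) ∈ {1,...,n}^m with p_1 + ... + p_m = n + m − 1. -/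
/-!
With zero-based column indices the condition `∑ (j + 1) < n + |S|` becomes `∑ j < n`.
Hence a set `F` is a face exactly when the staircase heights `q i` (the largest column index
of `F` in row `i`, or `0` if the row is empty) add up to less than `n`, because the elements of
`F` of maximal column index in their row form the heaviest set with distinct rows. Raising one
height, every face lies below some `q` with `∑ q = n - 1` (`isFaceDJ_iff_exists_heights`).
The sets `{(i, j) : j ≤ q i}` for such `q` are themselves faces, every face lies in one of them, and
they are pairwise incomparable since the `q` all have the same sum. The theorem follows with
`p = q + 1`.
-/

open Finset

/-- A set `F` of variables `t_{ij}` (pairs `(i,j) ∈ Fin m × Fin n`, the index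
`j : Fin n` standing for the column index `j+1 ∈ {1,…,n}`) is a face of `Δ(J)`,
where `J` is generated by the monomials `t_{i₁j₁}⋯t_{iₖjₖ}` with
`i₁ < ⋯ < iₖ` and `j₁ + ⋯ + jₖ ≥ n + k`: no such generator divides the
product of the variables in `F`, i.e. every nonempty subset `S ⊆ F` whose
elements have pairwise distinct row indices satisfies `∑ j < n + |S|`. -/
def IsFaceDJ (m n : ℕ) (F : Finset (Fin m × Fin n)) : Prop :=
  ∀ S ⊆ F, (∀ a ∈ S, ∀ b ∈ S, a ≠ b → a.1 ≠ b.1) → S.Nonempty →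
    ∑ x ∈ S, ((x.2 : ℕ) + 1) < n + S.card

/-- The inequality defining a face, in zero-based column indices. -/
lemma sum_succ_lt_iff {m n : ℕ} (S : Finset (Fin m × Fin n)) :
    ∑ x ∈ S, ((x.2 : ℕ) + 1) < n + S.card ↔ ∑ x ∈ S, (x.2 : ℕ) < n := by
  rw [sum_add_distrib]
  simp

lemma sum_row_eq {m n : ℕ} (q : Fin m → ℕ) (S : Finset (Fin m × Fin n))
    (hS : ∀ a ∈ S, ∀ b ∈ S, a ≠ b → a.1 ≠ b.1) :
    ∑ x ∈ S, q x.1 = ∑ i ∈ S.image Prod.fst, q i := by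
  rw [sum_image]
  intro a ha b hb hab
  by_contra hne
  exact hS a ha b hb hne hab

lemma isFaceDJ_of_heights {m n : ℕ} {F : Finset (Fin m × Fin n)} (q : Fin m → ℕ)
    (hq : ∑ i, q i < n) (hF : ∀ x ∈ F, (x.2 : ℕ) ≤ q x.1) : IsFaceDJ m n F := by
  intro S hSF hS _
  rw [sum_succ_lt_iff]
  calc ∑ x ∈ S, (x.2 : ℕ) ≤ ∑ x ∈ S, q x.1 := sum_le_sum fun x hx => hF x (hSF hx)
    _ = ∑ i ∈ S.image Prod.fst, q i := sum_row_eq q S hS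
    _ ≤ ∑ i, q i := sum_le_sum_of_subset (subset_univ _)
    _ < n := hq

lemma exists_heights_lt {m n : ℕ} (hn : 1 ≤ n) {F : Finset (Fin m × Fin n)}
    (hF : IsFaceDJ m n F) :
    ∃ q : Fin m → ℕ, ∑ i, q i < n ∧ ∀ x ∈ F, (x.2 : ℕ) ≤ q x.1 := by
  let q : Fin m → ℕ := fun i => (F.filter fun x => x.1 = i).sup fun x => (x.2 : ℕ)
  have hle : ∀ x ∈ F, (x.2 : ℕ) ≤ q x.1 := fun x hx =>
    le_sup (f := fun x : Fin m × Fin n => (x.2 : ℕ)) (mem_filter.2 ⟨hx, rfl⟩)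
  refine ⟨q, ?_, hle⟩
  -- The cells of maximal column index in their row: one for each nonempty row.
  let S := F.filter fun x => (x.2 : ℕ) = q x.1
  have hS : ∀ a ∈ S, ∀ b ∈ S, a ≠ b → a.1 ≠ b.1 := by
    intro a ha b hb hne h
    refine hne (Prod.ext h (Fin.ext ?_))
    rw [(mem_filter.1 ha).2, (mem_filter.1 hb).2, h]
  have hsum : ∑ x ∈ S, (x.2 : ℕ) = ∑ i, q i := by
    rw [sum_congr rfl fun x hx => (mem_filter.1 hx).2, sum_row_eq q S hS]
    refine sum_subset (subset_univ _) fun i _ hi => ?_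
    rcases (F.filter fun x => x.1 = i).eq_empty_or_nonempty with h | h
    · simp [q, h]
    · obtain ⟨x, hx, hxq⟩ := exists_mem_eq_sup _ h fun x => (x.2 : ℕ)
      obtain ⟨hxF, rfl⟩ := mem_filter.1 hx
      exact absurd (mem_image_of_mem _ (mem_filter.2 ⟨hxF, hxq.symm⟩)) hi
  rw [← hsum]
  rcases S.eq_empty_or_nonempty with h | h
  · rw [h, sum_empty]
    exact hn
  · exact (sum_succ_lt_iff S).1 (hF S (filter_subset _ _) hS h)

/-- The faces are the sets lying below some height function of total height `n - 1`. -/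
lemma isFaceDJ_iff_exists_heights {m n : ℕ} (hm : 1 ≤ m) (hn : 1 ≤ n)
    (F : Finset (Fin m × Fin n)) :
    IsFaceDJ m n F ↔
      ∃ q : Fin m → ℕ, ∑ i, q i = n - 1 ∧ ∀ x ∈ F, (x.2 : ℕ) ≤ q x.1 := by
  constructor
  · intro hF
    obtain ⟨q, hq, hle⟩ := exists_heights_lt hn hF
    -- The missing height is added to the first row.
    refine ⟨fun i => q i + if i = ⟨0, hm⟩ then n - 1 - ∑ i, q i else 0, ?_,
      fun x hx => (hle x hx).trans (Nat.le_add_right _ _)⟩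
    rw [sum_add_distrib, sum_ite_eq' univ, if_pos (mem_univ _)]
    omega
  · rintro ⟨q, hq, hle⟩
    exact isFaceDJ_of_heights q (by omega) hle

/-- the facets of `Δ(J)` are exactly the sets
`F_p = {t_{ij} : 1 ≤ i ≤ m, 1 ≤ j ≤ pᵢ}` for `p ∈ {1,…,n}^m` with
`∑ pᵢ = n + m − 1`. -/
theorem stmt8 (m n : ℕ) (hm : 1 ≤ m) (hn : 1 ≤ n) (F : Finset (Fin m × Fin n)) :
    (IsFaceDJ m n F ∧ ∀ G, IsFaceDJ m n G → F ⊆ G → F = G) ↔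
    ∃ p : Fin m → ℕ, (∀ i, 1 ≤ p i ∧ p i ≤ n) ∧ (∑ i, p i = n + m - 1) ∧
      F = Finset.univ.filter (fun x : Fin m × Fin n => (x.2 : ℕ) + 1 ≤ p x.1) := by
  constructor
  · rintro ⟨hF, hmax⟩
    obtain ⟨q, hq, hle⟩ := (isFaceDJ_iff_exists_heights hm hn F).1 hF
    refine ⟨fun i => q i + 1, fun i => ⟨Nat.le_add_left _ _, ?_⟩, ?_, hmax _ ?_ ?_⟩
    · have : q i ≤ ∑ i, q i := single_le_sum (fun _ _ => Nat.zero_le _) (mem_univ i)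
      show q i + 1 ≤ n
      omega
    · rw [sum_add_distrib, hq]
      simp only [sum_const, card_univ, Fintype.card_fin, smul_eq_mul, mul_one]
      omega
    · exact (isFaceDJ_iff_exists_heights hm hn _).2 ⟨q, hq, fun x hx => by simpa using hx⟩
    · exact fun x hx => by simpa using hle x hx
  · rintro ⟨p, hp, hsum, rfl⟩
    have hq : ∑ i, (p i - 1) = n - 1 := by
      have h : ∑ i, p i = ∑ i, (p i - 1) + m := by
        rw [sum_congr rfl fun i _ => (Nat.sub_add_cancel (hp i).1).symm, sum_add_distrib]
        simp
      omega
    refine ⟨(isFaceDJ_iff_exists_heights hm hn _).2 ⟨fun i => p i - 1, hq, fun x hx => ?_⟩,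
      fun G hG hsub => hsub.antisymm fun x hx => ?_⟩
    · exact Nat.le_sub_of_add_le (mem_filter.1 hx).2
    · obtain ⟨q, hq', hle⟩ := (isFaceDJ_iff_exists_heights hm hn G).1 hG
      -- The top cell of row `i` belongs to `G`, so `q` dominates `p - 1`.
      have hpq : ∀ i ∈ (univ : Finset (Fin m)), p i - 1 ≤ q i := fun i _ => by
        have hi := hp i
        exact hle (i, ⟨p i - 1, by omega⟩) (hsub (mem_filter.2 ⟨mem_univ _, by simp; omega⟩))
      have heq := (sum_eq_sum_iff_of_le hpq).1 (hq.trans hq'.symm) x.1 (mem_univ _)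
      have h1 := hle x hx
      have h2 := hp x.1
      exact mem_filter.2 ⟨mem_univ _, by omega⟩
end

section
/- Let R be a normal Noetherian domain and J an ideal of R all of whose powers are integrally closed (J is a normal ideal). Then the Rees algebra R(J) = ⊕_{k≥0} J^k t^k ⊆ R[t] is a normal domain. -/
/-!
`R[t]` is integrally closed because `R` is, so it suffices that the Rees algebra `A` is integrally
closed in `R[t]`; no comparison of fraction fields is needed, and `J = 0` needs no separate
treatment.

Let `f ∈ R[t]` be integral over `A`. Integrality passes to the homogeneous components `aᵢ tⁱ` of
`f`: the homomorphism `R[t] → R[t][Y]`, `t ↦ tY`, records the grading and carries `A` into `A[Y]`,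
so the image `∑ aᵢ tⁱ Yⁱ` of `f` is integral over `A[Y]`, and the `Y`-coefficients of an element
integral over `A[Y]` are integral over `A` (`IsIntegral.coeff`). For a homogeneous element `a tᵈ`,
the coefficient of `t^(dk)` in a monic equation of degree `k` over `A` is an equation of integral
dependence of `a` over `Jᵈ`, so `a ∈ Jᵈ` by normality of `J`.
-/

open Finset

/-- `x` is integral over the ideal `J`: it satisfies an equation
`x^k + c₁ x^{k-1} + ⋯ + c_k = 0` with `cᵢ ∈ Jⁱ`. -/
def IsIntegralOverIdeal {R : Type*} [CommRing R] (J : Ideal R) (x : R) : Prop :=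
  ∃ k : ℕ, 0 < k ∧ ∃ c : ℕ → R, (∀ i ∈ Finset.Icc 1 k, c i ∈ J ^ i) ∧
    x ^ k + ∑ i ∈ Finset.Icc 1 k, c i * x ^ (k - i) = 0

/-- An ideal is integrally closed if it contains every element integral over it. -/
def Ideal.IsIntClosed {R : Type*} [CommRing R] (J : Ideal R) : Prop :=
  ∀ x, IsIntegralOverIdeal J x → x ∈ J

open Polynomial in
/-- The homomorphism `R[t] → R[t][Y]`, `t ↦ tY`, whose `Y`-coefficients are the homogeneous
components for the `t`-grading. -/
noncomputable def gradingHom (R : Type*) [CommRing R] : R[X] →+* R[X][X] :=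
  eval₂RingHom (C.comp C) (C X * X)

open Polynomial in
lemma gradingHom_coeff {R : Type*} [CommRing R] (f : R[X]) (i : ℕ) :
    (gradingHom R f).coeff i = monomial i (f.coeff i) := by
  induction f using Polynomial.induction_on' with
  | add p q hp hq => simp [hp, hq]
  | monomial n a =>
    simp only [gradingHom, coe_eval₂RingHom, eval₂_monomial, RingHom.comp_apply, mul_pow,
      ← C_pow, ← mul_assoc, ← C_mul, coeff_C_mul_X_pow, coeff_monomial]
    by_cases h : i = n
    · subst h; simp [C_mul_X_pow_eq_monomial]
    · simp [h, Ne.symm h]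

attribute [local instance] Polynomial.algebra in
open Polynomial in
/-- Homogeneous components of an element of `R[t]` integral over the Rees algebra are integral
over the Rees algebra. -/
lemma isIntegral_component {R : Type*} [CommRing R] (J : Ideal R) {f : R[X]}
    (hf : IsIntegral (reesAlgebra J) f) (i : ℕ) :
    IsIntegral (reesAlgebra J) (monomial i (f.coeff i)) := by
  rw [← gradingHom_coeff]
  refine IsIntegral.coeff ?_ i
  obtain ⟨P, hP, hPf⟩ := hf
  let ψ : reesAlgebra J →+* R[X][X] := (gradingHom R).comp (algebraMap (reesAlgebra J) R[X])
  -- `gradingHom` maps the Rees algebra `A` into `A[Y]`, so the equation lifts to `A[Y]`.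
  have hlift : P.map ψ ∈ lifts (algebraMap (reesAlgebra J)[X] R[X][X]) := by
    rw [lifts_iff_coeff_lifts]
    intro n
    rw [coeff_map]
    change ψ (P.coeff n) ∈ lifts (algebraMap (reesAlgebra J) R[X])
    rw [lifts_iff_coeff_lifts]
    intro m
    refine ⟨⟨monomial m ((P.coeff n : R[X]).coeff m),
      reesAlgebra.monomial_mem.mpr ((P.coeff n).2 m)⟩, ?_⟩
    exact (gradingHom_coeff _ _).symm
  obtain ⟨Q, hQ, -, hQm⟩ := lifts_and_natDegree_eq_and_monic hlift (hP.map ψ)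
  refine ⟨Q, hQm, ?_⟩
  rw [← eval_map, hQ, eval_map, ← hom_eval₂, hPf, map_zero]

open Polynomial in
/-- Comparing coefficients of `t^(dk)` in an integral equation of degree `k` for `a tᵈ` over the
Rees algebra gives an equation of integral dependence of `a` over `Jᵈ`. -/
lemma isIntegralOverIdeal_of_monomial {R : Type*} [CommRing R] [Nontrivial R] (J : Ideal R)
    {d : ℕ} {a : R} (h : IsIntegral (reesAlgebra J) (monomial d a)) :
    IsIntegralOverIdeal (J ^ d) a := by
  obtain ⟨P, hP, hPa⟩ := h
  have hk : 0 < P.natDegree := by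
    rw [Nat.pos_iff_ne_zero]
    intro h0
    rw [hP.natDegree_eq_zero.mp h0] at hPa
    simp at hPa
  refine ⟨P.natDegree, hk, fun i => (P.coeff (P.natDegree - i) : R[X]).coeff (d * i),
    fun i _ => ?_, ?_⟩
  · rw [← pow_mul]
    exact (P.coeff (P.natDegree - i)).2 (d * i)
  · have key : ∀ j ≤ P.natDegree, (algebraMap _ R[X] (P.coeff j) * monomial d a ^ j).coeff
        (d * P.natDegree) = (P.coeff j : R[X]).coeff (d * (P.natDegree - j)) * a ^ j := by
      intro j hj
      have e : d * P.natDegree = d * (P.natDegree - j) + d * j := by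
        rw [← mul_add, Nat.sub_add_cancel hj]
      rw [monomial_pow, e, coeff_mul_monomial]
      rfl
    have h1 := congrArg (fun p : R[X] => p.coeff (d * P.natDegree)) hPa
    simp only [eval₂_eq_sum_range, finsetSum_coeff, coeff_zero] at h1
    rw [Finset.sum_congr rfl fun j hj => key j (Nat.lt_succ_iff.mp (Finset.mem_range.mp hj)),
      Finset.sum_range_succ, hP.coeff_natDegree] at h1
    rw [← h1, add_comm]
    congr 1
    · refine Finset.sum_nbij' (P.natDegree - ·) (P.natDegree - ·) ?_ ?_ ?_ ?_ ?_
      · intro i hi; simp at hi ⊢; omega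
      · intro i hi; simp at hi ⊢; omega
      · intro i hi; simp at hi ⊢; omega
      · intro i hi; simp at hi ⊢; omega
      · intro i hi
        simp only [Finset.mem_Icc] at hi
        simp only [Nat.sub_sub_self hi.2]
    · simp

/-- if `R` is a normal Noetherian domain and `J` is a normal
ideal (all powers `J^k`, `k ≥ 1`, are integrally closed), then the Rees
algebra `R(J) = ⊕ₖ Jᵏ tᵏ ⊆ R[t]` is a normal domain. -/
theorem stmt12 {R : Type*} [CommRing R] [IsDomain R] [IsNoetherianRing R]
    [IsIntegrallyClosed R] (J : Ideal R)
    (hJ : ∀ k : ℕ, 1 ≤ k → (J ^ k).IsIntClosed) :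
    IsDomain (reesAlgebra J) ∧ IsIntegrallyClosed (reesAlgebra J) := by
  refine ⟨inferInstance, ?_⟩
  suffices IsIntegrallyClosedIn (reesAlgebra J) (Polynomial R) from
    .of_isIntegrallyClosed_of_isIntegrallyClosedIn _ (Polynomial R)
  refine isIntegrallyClosedIn_iff.mpr ⟨Subtype.val_injective, fun {f} hf => ⟨⟨f, fun i => ?_⟩, rfl⟩⟩
  rcases Nat.eq_zero_or_pos i with rfl | hi
  · simp
  · exact hJ i hi _ (isIntegralOverIdeal_of_monomial J (isIntegral_component J hf i))
end
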